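/- The black type preorder ⊑•type is an inequational λ-theory (a compatible preorder on λ-terms containing β-conversion); moreover it is neither extensional nor semi-extensional (it contains neither η-conversion nor η-reduction). -/

import Mathlib

set_option autoImplicit false

/-! ### Players -/

inductive Player : Type
  | white
  | black
deriving DecidableEq

/-- The opposite player. -/
def Player.op : Player → Player
  | .white => .black
  | .black => .white

/-- `gamma p q` is `0` if the players agree (silent) and `1` otherwise (interaction). -/
def Player.gamma (p q : Player) : ℕ := if p = q then 0 else 1

/-! ### Ordinary λ-terms (de Bruijn representation) -/

inductive Lam : Type
  | var : ℕ → Lam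
  | lam : Lam → Lam
  | app : Lam → Lam → Lam
deriving DecidableEq

namespace Lam

/-- Shift the free de Bruijn indices ≥ `d` by one. -/
def liftAt : Lam → ℕ → Lam
  | .var n, d => .var (if n < d then n else n + 1)
  | .lam t, d => .lam (t.liftAt (d + 1))
  | .app t u, d => .app (t.liftAt d) (u.liftAt d)

/-- Capture-avoiding substitution of `u` for the de Bruijn index `x`. -/
def subst : Lam → ℕ → Lam → Lam
  | .var n, x, u => if n = x then u else if x < n then .var (n - 1) else .var n
  | .lam t, x, u => .lam (t.subst (x + 1) (u.liftAt 0))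
  | .app t s, x, u => .app (t.subst x u) (s.subst x u)

end Lam

/-- Root β-rule: `(λx.t) u ↦ t[x:=u]`. -/
inductive LBetaRoot : Lam → Lam → Prop
  | beta (t u : Lam) : LBetaRoot (.app (.lam t) u) (t.subst 0 u)

/-- Root η-rule: `λx. t x ↦ t` with `x ∉ FV(t)` (enforced by the lifting). -/
inductive LEtaRoot : Lam → Lam → Prop
  | eta (t : Lam) : LEtaRoot (.lam (.app (t.liftAt 0) (.var 0))) t

/-- Closure of a root relation under all contexts. -/
inductive LFull (R : Lam → Lam → Prop) : Lam → Lam → Prop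
  | root {t u : Lam} : R t u → LFull R t u
  | lam {t u : Lam} : LFull R t u → LFull R (.lam t) (.lam u)
  | appL {t t' : Lam} (u : Lam) : LFull R t t' → LFull R (.app t u) (.app t' u)
  | appR (t : Lam) {u u' : Lam} : LFull R u u' → LFull R (.app t u) (.app t u')

/-- Closure under applicative spine contexts `⟨·⟩ t1 … tk`. -/
inductive LSpine (R : Lam → Lam → Prop) : Lam → Lam → Prop
  | root {t u : Lam} : R t u → LSpine R t u
  | appL {t t' : Lam} (u : Lam) : LSpine R t t' → LSpine R (.app t u) (.app t' u)

/-- Closure under head contexts `λx1…xn.⟨·⟩ t1 … tk`. -/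
inductive LHead (R : Lam → Lam → Prop) : Lam → Lam → Prop
  | spine {t u : Lam} : LSpine R t u → LHead R t u
  | lam {t u : Lam} : LHead R t u → LHead R (.lam t) (.lam u)

/-- β-reduction. -/
def LBeta : Lam → Lam → Prop := LFull LBetaRoot
/-- η-reduction. -/
def LEta : Lam → Lam → Prop := LFull LEtaRoot
/-- Head reduction. -/
def LHStep : Lam → Lam → Prop := LHead LBetaRoot
/-- Multistep head reduction. -/
def LHSteps : Lam → Lam → Prop := Relation.ReflTransGen LHStep

/-- β-conversion (reflexive-symmetric-transitive closure of β-reduction). -/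
def LBetaConv : Lam → Lam → Prop :=
  Relation.ReflTransGen (fun a b => LBeta a b ∨ LBeta b a)
/-- η-conversion. -/
def LEtaConv : Lam → Lam → Prop :=
  Relation.ReflTransGen (fun a b => LEta a b ∨ LEta b a)

/-- Head normal forms: no head step out of `t`. -/
def Lam.LHNF (t : Lam) : Prop := ∀ u, ¬ LHStep t u

/-- Head convergence: `t ⇓h`. -/
def Lam.HConv (t : Lam) : Prop := ∃ h, LHSteps t h ∧ h.LHNF

/-- Ordinary contexts (one hole). -/
inductive LCtx : Type
  | hole : LCtx
  | lam : LCtx → LCtx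
  | appL : LCtx → Lam → LCtx
  | appR : Lam → LCtx → LCtx

/-- Plugging (allowing variable capture). -/
def LCtx.fill : LCtx → Lam → Lam
  | .hole, t => t
  | .lam C, t => .lam (C.fill t)
  | .appL C u, t => .app (C.fill t) u
  | .appR s C, t => .app s (C.fill t)

/-- Head contextual preorder on λ-terms. -/
def CtxLe (t u : Lam) : Prop := ∀ C : LCtx, (C.fill t).HConv → (C.fill u).HConv

/-! ### Checkers terms -/

inductive CTerm : Type
  | var : ℕ → CTerm
  | lam : Player → CTerm → CTerm
  | app : Player → CTerm → CTerm → CTerm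
deriving DecidableEq

namespace CTerm

/-- Shift the free de Bruijn indices ≥ `d` by one. -/
def liftAt : CTerm → ℕ → CTerm
  | .var n, d => .var (if n < d then n else n + 1)
  | .lam p t, d => .lam p (t.liftAt (d + 1))
  | .app p t u, d => .app p (t.liftAt d) (u.liftAt d)

/-- Capture-avoiding substitution of `u` for the de Bruijn index `x`. -/
def subst : CTerm → ℕ → CTerm → CTerm
  | .var n, x, u => if n = x then u else if x < n then .var (n - 1) else .var n
  | .lam p t, x, u => .lam p (t.subst (x + 1) (u.liftAt 0))
  | .app p t s, x, u => .app p (t.subst x u) (s.subst x u)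

/-- The underlying ordinary λ-term of a checkers term. -/
def untag : CTerm → Lam
  | .var n => .var n
  | .lam _ t => .lam t.untag
  | .app _ t u => .app t.untag u.untag

end CTerm

/-- Player lifting: tag every abstraction and application with player `p`. -/
def Lam.tag : Lam → Player → CTerm
  | .var n, _ => .var n
  | .lam t, p => .lam p (t.tag p)
  | .app t u, p => .app p (t.tag p) (u.tag p)

/-- Silent β root rule: the abstraction and the application carry the same player. -/
inductive SilentRoot : CTerm → CTerm → Prop
  | beta (p : Player) (t u : CTerm) : SilentRoot (.app p (.lam p t) u) (t.subst 0 u)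

/-- Interaction β root rule: the application carries the opposite player of the abstraction. -/
inductive InterRoot : CTerm → CTerm → Prop
  | beta (p : Player) (t u : CTerm) : InterRoot (.app p.op (.lam p t) u) (t.subst 0 u)

/-- Closure of a root relation under all checkers contexts. -/
inductive CFull (R : CTerm → CTerm → Prop) : CTerm → CTerm → Prop
  | root {t u : CTerm} : R t u → CFull R t u
  | lam (p : Player) {t u : CTerm} : CFull R t u → CFull R (.lam p t) (.lam p u)
  | appL (p : Player) {t t' : CTerm} (u : CTerm) : CFull R t t' → CFull R (.app p t u) (.app p t' u)
  | appR (p : Player) (t : CTerm) {u u' : CTerm} : CFull R u u' → CFull R (.app p t u) (.app p t u')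

/-- Closure under applicative spine contexts `⟨·⟩ @_{q1} t1 … @_{qk} tk`. -/
inductive CSpine (R : CTerm → CTerm → Prop) : CTerm → CTerm → Prop
  | root {t u : CTerm} : R t u → CSpine R t u
  | appL (p : Player) {t t' : CTerm} (u : CTerm) : CSpine R t t' → CSpine R (.app p t u) (.app p t' u)

/-- Closure under checkers head contexts `λ_{p1}x1…λ_{pn}xn.⟨·⟩ @_{q1} t1 … @_{qk} tk`. -/
inductive CHead (R : CTerm → CTerm → Prop) : CTerm → CTerm → Prop
  | spine {t u : CTerm} : CSpine R t u → CHead R t u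
  | lam (p : Player) {t u : CTerm} : CHead R t u → CHead R (.lam p t) (.lam p u)

/-- Silent β-reduction `→τ`. -/
def StepTau : CTerm → CTerm → Prop := CFull SilentRoot
/-- Interaction β-reduction `→⊛`. -/
def StepInt : CTerm → CTerm → Prop := CFull InterRoot
/-- Checkers β-reduction `→βch`. -/
def StepBch (t u : CTerm) : Prop := StepTau t u ∨ StepInt t u

/-- Silent head reduction `→hτ`. -/
def HStepTau : CTerm → CTerm → Prop := CHead SilentRoot
/-- Interaction head reduction `→h⊛`. -/
def HStepInt : CTerm → CTerm → Prop := CHead InterRoot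
/-- Checkers head reduction `→hch`. -/
def HStepCh (t u : CTerm) : Prop := HStepTau t u ∨ HStepInt t u

/-- Checkers head normal form. -/
def CTerm.HNF (t : CTerm) : Prop := ∀ u, ¬ HStepCh t u

/-- `BigStep t k` means `t ⇓^k`: the (deterministic) checkers head evaluation of `t`
terminates and performs exactly `k` interaction steps. -/
inductive BigStep : CTerm → ℕ → Prop
  | nf {t : CTerm} : t.HNF → BigStep t 0
  | silent {t u : CTerm} {k : ℕ} : HStepTau t u → BigStep u k → BigStep t k
  | inter {t u : CTerm} {k : ℕ} : HStepInt t u → BigStep u k → BigStep t (k + 1)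

/-- `HRed t n i u`: a checkers head reduction sequence from `t` to `u` of length `n`
containing exactly `i` interaction steps. -/
inductive HRed : CTerm → ℕ → ℕ → CTerm → Prop
  | refl (t : CTerm) : HRed t 0 0 t
  | silent {t u s : CTerm} {n i : ℕ} : HStepTau t u → HRed u n i s → HRed t (n + 1) i s
  | inter {t u s : CTerm} {n i : ℕ} : HStepInt t u → HRed u n i s → HRed t (n + 1) (i + 1) s

/-- Checkers contexts (one hole). -/
inductive CCtx : Type
  | hole : CCtx
  | lam : Player → CCtx → CCtx
  | appL : Player → CCtx → CTerm → CCtx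
  | appR : Player → CTerm → CCtx → CCtx

/-- Plugging (allowing variable capture). -/
def CCtx.fill : CCtx → CTerm → CTerm
  | .hole, t => t
  | .lam p C, t => .lam p (C.fill t)
  | .appL p C u, t => .app p (C.fill t) u
  | .appR p s C, t => .app p s (C.fill t)

/-- Player lifting of ordinary contexts. -/
def LCtx.tag : LCtx → Player → CCtx
  | .hole, _ => .hole
  | .lam C, p => .lam p (C.tag p)
  | .appL C u, p => .appL p (C.tag p) (u.tag p)
  | .appR s C, p => .appR p (s.tag p) (C.tag p)

/-- Checkers interaction preorder `≼ctx⊛` on checkers terms. -/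
def IntCtxLe (t u : CTerm) : Prop :=
  ∀ (C : CCtx) (k : ℕ), BigStep (C.fill t) k → BigStep (C.fill u) k

/-- Checkers interaction improvement `≼imp⊛` on checkers terms. -/
def ImpCtxLe (t u : CTerm) : Prop :=
  ∀ (C : CCtx) (k : ℕ), BigStep (C.fill t) k → ∃ k', k' ≤ k ∧ BigStep (C.fill u) k'

/-- Interaction preorder `⊑int` on ordinary λ-terms, via black lifting. -/
def IntLe (t u : Lam) : Prop := IntCtxLe (t.tag .black) (u.tag .black)

/-- Interaction improvement `⊑int·imp` on ordinary λ-terms, via black lifting. -/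
def ImpLe (t u : Lam) : Prop := ImpCtxLe (t.tag .black) (u.tag .black)

/-- Interaction equivalence `≡int`. -/
def IntEq (t u : Lam) : Prop := IntLe t u ∧ IntLe u t

/-- Silent conversion `=τ`: reflexive-symmetric-transitive closure of `→τ`. -/
def SilentConv : CTerm → CTerm → Prop :=
  Relation.ReflTransGen (fun a b => StepTau a b ∨ StepTau b a)


/-! ### Checkers multi types -/

/-- Linear types: an atom `X` and arrows `M →_{p,q} L`, where a multi type `M`
is a finite multiset of linear types (syntactically represented as a list). -/
inductive LType : Type
  | atom : LType
  | arrow : List LType → Player → Player → LType → LType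

/-- Type environments: a multi type for every de Bruijn index. -/
abbrev TEnv : Type := ℕ → Multiset LType

/-- The empty type environment. -/
def TEnv.zero : TEnv := fun _ => 0

/-- Pointwise multiset union of type environments. -/
def TEnv.add (Γ Δ : TEnv) : TEnv := fun n => Γ n + Δ n

/-- The environment assigning `[L]` to `x` and `0` elsewhere. -/
def TEnv.single (x : ℕ) (L : LType) : TEnv := fun n => if n = x then {L} else 0

/-- Extend an environment with a multi type for the freshly bound de Bruijn index `0`. -/
def TEnv.cons (M : Multiset LType) (Γ : TEnv) : TEnv := fun n =>
  match n with
  | 0 => M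
  | n + 1 => Γ n

mutual
  /-- Type derivations `π ▷ Γ ⊢^k t : L` of the checkers multi type system. -/
  inductive Deriv : TEnv → ℕ → CTerm → LType → Type
    | ax (x : ℕ) (L : LType) : Deriv (TEnv.single x L) 0 (.var x) L
    | lam {Γ : TEnv} {k : ℕ} {t : CTerm} {L : LType} (p q : Player) (M : List LType) :
        Deriv (TEnv.cons (Multiset.ofList M) Γ) k t L →
        Deriv Γ k (.lam p t) (.arrow M p q L)
    | app {Γ Δ : TEnv} {k₁ k₂ : ℕ} {t u : CTerm} {M : List LType} {p q : Player} {L : LType} :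
        Deriv Γ k₁ t (.arrow M p q L) → DerivM Δ k₂ u M →
        Deriv (TEnv.add Γ Δ) (k₁ + k₂ + Player.gamma p q) (.app q t u) L
  /-- Derivations `Γ ⊢^k t : M` of a multi type (the `many` rule). -/
  inductive DerivM : TEnv → ℕ → CTerm → List LType → Type
    | nil (t : CTerm) : DerivM TEnv.zero 0 t []
    | cons {Γ Δ : TEnv} {k k' : ℕ} {t : CTerm} {L : LType} {M : List LType} :
        Deriv Γ k t L → DerivM Δ k' t M → DerivM (TEnv.add Γ Δ) (k + k') t (L :: M)
end

mutual
  /-- The (applicative) size `|π|` of a derivation: its number of `@` rules. -/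
  def Deriv.size {Γ : TEnv} {k : ℕ} {t : CTerm} {L : LType} : Deriv Γ k t L → ℕ
    | .ax _ _ => 0
    | .lam _ _ _ π => Deriv.size π
    | .app π μ => Deriv.size π + DerivM.size μ + 1
  /-- Size of a multi-type derivation. -/
  def DerivM.size {Γ : TEnv} {k : ℕ} {t : CTerm} {M : List LType} : DerivM Γ k t M → ℕ
    | .nil _ => 0
    | .cons π μ => Deriv.size π + DerivM.size μ
end

/-- Typability `Γ ⊢^k t : L`. -/
def TJ (Γ : TEnv) (k : ℕ) (t : CTerm) (L : LType) : Prop := Nonempty (Deriv Γ k t L)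

/-- Checkers relational interpretation `⟦t⟧⊛ = {(Γ, k, L) | Γ ⊢^k t : L}`. -/
def CSem (t : CTerm) : Set (TEnv × ℕ × LType) := {x | TJ x.1 x.2.1 t x.2.2}

/-- Black type preorder `⊑•type` on ordinary λ-terms. -/
def BTypeLe (t u : Lam) : Prop := CSem (t.tag .black) ⊆ CSem (u.tag .black)

/-! ### Tight typings -/

/-- All arrows occurring in a linear type are silent (`p = q`). -/
inductive AllSilent : LType → Prop
  | atom : AllSilent .atom
  | arrow {M : List LType} {p : Player} {L : LType} :
      (∀ L' ∈ M, AllSilent L') → AllSilent L → AllSilent (.arrow M p p L)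

/-- The number of nonempty multi types occurring in a linear type. -/
def LType.neCount : LType → ℕ
  | .atom => 0
  | .arrow M _ _ L =>
      min M.length 1 + (M.attach.map fun x => LType.neCount x.1).sum + LType.neCount L
decreasing_by
  · have := List.sizeOf_lt_of_mem x.2
    simp only [LType.arrow.sizeOf_spec]
    omega
  · simp only [LType.arrow.sizeOf_spec]
    omega

/-- The number of nonempty multi types occurring in a multi type (counting itself). -/
def mNeCount (m : Multiset LType) : ℕ :=
  min (Multiset.card m) 1 + (m.map LType.neCount).sum

/-- A typing `(Γ, L)` is tight when all the multi types occurring in `Γ` and `L`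
are empty except for exactly one, and all arrows occurring in `(Γ, L)` are silent. -/
def Tight (Γ : TEnv) (L : LType) : Prop :=
  AllSilent L ∧ (∀ n : ℕ, ∀ L' ∈ Γ n, AllSilent L') ∧
    ∃ S : Finset ℕ, (∀ n : ℕ, n ∉ S → Γ n = 0) ∧
      (∑ n ∈ S, mNeCount (Γ n)) + LType.neCount L = 1

/-!
For a fixed linear type `L`, the pairs `(Γ, k)` with `Γ ⊢^k t : L` form a subset of the additive
monoid `TEnv × ℕ`, and the typing rules become equations between such subsets: the rule `many` is a
Minkowski sum, an application is a union of Minkowski sums, and an abstraction is a union of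
preimages. Lifting and substitution then act on these subsets through additive maps
`TEnv × ℕ →+ Set (TEnv × ℕ)`, for instance `(Γ, k) ↦ {(Γ without x, k)} + ⟦u⟧ (Γ x)` for `[x := u]`,
and additivity gives the application case of the induction on terms. A silent β-redex adds no weight
and hence has the same typings as its contractum. Black-lifted terms contract only silent redexes,
but a variable may be given a type with white arrows, and then η-expanding it costs one interaction.
-/

open scoped Pointwise

section BindHom

variable {A B : Type*} [AddCommMonoid A] [AddCommMonoid B]

/-- Extension of a set-valued additive map to sets of arguments: the Kleisli extension for the
powerset monad, which is additive for Minkowski sums. -/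
def bindHom (φ : A →+ Set B) : Set A →+ Set B where
  toFun S := ⋃ a ∈ S, φ a
  map_zero' := by simp
  map_add' S T := by
    ext b
    simp only [Set.mem_iUnion₂, Set.mem_add, exists_prop]
    constructor
    · rintro ⟨_, ⟨a, ha, a', ha', rfl⟩, hb⟩
      rw [map_add] at hb
      obtain ⟨c, hc, c', hc', rfl⟩ := hb
      exact ⟨c, ⟨a, ha, hc⟩, c', ⟨a', ha', hc'⟩, rfl⟩
    · rintro ⟨c, ⟨a, ha, hc⟩, c', ⟨a', ha', hc'⟩, rfl⟩
      exact ⟨a + a', ⟨a, ha, a', ha', rfl⟩, by rw [map_add]; exact Set.add_mem_add hc hc'⟩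

theorem mem_bindHom {φ : A →+ Set B} {S : Set A} {b : B} :
    b ∈ bindHom φ S ↔ ∃ a ∈ S, b ∈ φ a :=
  Set.mem_iUnion₂.trans <| by simp only [exists_prop]

theorem bindHom_singleton (φ : A →+ Set B) (a : A) : bindHom φ {a} = φ a :=
  Set.biUnion_singleton a φ

theorem bindHom_iUnion {ι : Sort*} (φ : A →+ Set B) (S : ι → Set A) :
    bindHom φ (⋃ i, S i) = ⋃ i, bindHom φ (S i) :=
  Set.biUnion_iUnion S φ

theorem bindHom_singletonAddMonoidHom_comp (f : A →+ B) (S : Set A) :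
    bindHom (Set.singletonAddMonoidHom.comp f) S = f '' S :=
  (Set.image_eq_iUnion f S).symm

end BindHom

namespace TEnv

/-- Action on environments of lifting a term at index `d`: the fresh index `d` gets the empty
multi type. -/
def weaken (d : ℕ) : TEnv →+ TEnv where
  toFun Γ n := if n < d then Γ n else if n = d then 0 else Γ (n - 1)
  map_zero' := by funext n; simp
  map_add' Γ Δ := by funext n; simp only [Pi.add_apply]; split_ifs <;> simp

/-- Action on environments of removing the index `x`, the indices above it being shifted down. -/
def erase (x : ℕ) : TEnv →+ TEnv where
  toFun Γ n := Γ (if n < x then n else n + 1)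
  map_zero' := rfl
  map_add' _ _ := rfl

theorem single_apply (x : ℕ) (L : LType) (n : ℕ) :
    single x L n = if n = x then {L} else 0 := rfl

theorem weaken_single (d n : ℕ) (L : LType) :
    weaken d (single n L) = single (if n < d then n else n + 1) L := by
  funext i
  simp only [weaken, single, AddMonoidHom.coe_mk, ZeroHom.coe_mk]
  split_ifs <;> first | rfl | omega

theorem weaken_succ_cons (d : ℕ) (m : Multiset LType) (Γ : TEnv) :
    weaken (d + 1) (cons m Γ) = cons m (weaken d Γ) := by
  funext n
  rcases n with _ | _ | n <;> rcases d with _ | d <;> simp [weaken, cons]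

theorem weaken_zero_eq_cons (Γ : TEnv) : weaken 0 Γ = cons 0 Γ := by
  funext n
  cases n <;> simp [weaken, cons]

theorem cons_zero_single (x : ℕ) (L : LType) : cons 0 (single x L) = single (x + 1) L := by
  rw [← weaken_zero_eq_cons, weaken_single, if_neg x.not_lt_zero]

theorem erase_succ_cons (x : ℕ) (m : Multiset LType) (Γ : TEnv) :
    erase (x + 1) (cons m Γ) = cons m (erase x Γ) := by
  funext n
  rcases n with _ | n
  · rfl
  · by_cases h : n < x <;> simp [erase, cons, h]

theorem cons_erase_zero (Γ : TEnv) : cons (Γ 0) (erase 0 Γ) = Γ := by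
  funext n
  rcases n with _ | n <;> simp [erase, cons]

theorem erase_single_self (x : ℕ) (L : LType) : erase x (single x L) = 0 := by
  funext i
  simp only [erase, single, AddMonoidHom.coe_mk, ZeroHom.coe_mk]
  split_ifs <;> first | rfl | omega

theorem erase_single_of_lt {x n : ℕ} (h : n < x) (L : LType) :
    erase x (single n L) = single n L := by
  funext i
  simp only [erase, single, AddMonoidHom.coe_mk, ZeroHom.coe_mk]
  split_ifs <;> first | rfl | omega

theorem erase_single_of_gt {x n : ℕ} (h : x < n) (L : LType) :
    erase x (single n L) = single (n - 1) L := by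
  funext i
  simp only [erase, single, AddMonoidHom.coe_mk, ZeroHom.coe_mk]
  split_ifs <;> first | rfl | omega

end TEnv

/-- Weighted environments `(Γ, k)`: everything in a judgment `Γ ⊢^k t : L` but its subject `t` and
its type `L`. They add up componentwise along the typing rules. -/
abbrev WEnv : Type := TEnv × ℕ

/-- Extension of a weighted environment with a multi type for a freshly bound index `0`. -/
def WEnv.cons (m : Multiset LType) (w : WEnv) : WEnv := (TEnv.cons m w.1, w.2)

theorem WEnv.exists_cons_eq (w : WEnv) : ∃ m v, WEnv.cons m v = w :=
  ⟨w.1 0, (TEnv.erase 0 w.1, w.2), Prod.ext (TEnv.cons_erase_zero w.1) rfl⟩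

theorem WEnv.cons_inj {m m' : Multiset LType} {w w' : WEnv} :
    WEnv.cons m w = WEnv.cons m' w' ↔ m = m' ∧ w = w' := by
  constructor
  · intro h
    have h_env : TEnv.cons m w.1 = TEnv.cons m' w'.1 := congrArg Prod.fst h
    have h_weight : (WEnv.cons m w).2 = (WEnv.cons m' w').2 := congrArg Prod.snd h
    exact ⟨congrFun h_env 0, Prod.ext (funext fun n => congrFun h_env (n + 1)) h_weight⟩
  · rintro ⟨rfl, rfl⟩
    rfl

theorem WEnv.cons_add_cons (m m' : Multiset LType) (w w' : WEnv) :
    WEnv.cons m w + WEnv.cons m' w' = WEnv.cons (m + m') (w + w') := by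
  refine Prod.ext (funext fun n => ?_) rfl
  cases n <;> rfl

theorem WEnv.preimage_cons_bindHom {φ φ' : WEnv →+ Set WEnv}
    (h : ∀ m w, φ' (WEnv.cons m w) = WEnv.cons m '' φ w) (m : Multiset LType) (S : Set WEnv) :
    WEnv.cons m ⁻¹' bindHom φ' S = bindHom φ (WEnv.cons m ⁻¹' S) := by
  ext v
  simp only [Set.mem_preimage, mem_bindHom]
  constructor
  · rintro ⟨w', hw', hv⟩
    obtain ⟨m', w, rfl⟩ := w'.exists_cons_eq
    rw [h] at hv
    obtain ⟨v', hv', h_cons⟩ := hv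
    obtain ⟨rfl, rfl⟩ := WEnv.cons_inj.1 h_cons
    exact ⟨w, hw', hv'⟩
  · rintro ⟨w, hw, hv⟩
    exact ⟨WEnv.cons m w, hw, h m w ▸ Set.mem_image_of_mem _ hv⟩

namespace CTerm

/-- The typings of `t` with type `L`, i.e. the slice of `⟦t⟧⊛` at `L`. -/
def interp (t : CTerm) (L : LType) : Set WEnv := {w | TJ w.1 w.2 t L}

/-- The typings of `t` with a multi type, as the Minkowski sum of those with each of its
elements. Unlike `DerivM`, it sees multi types as genuine multisets. -/
def multiInterp (t : CTerm) : Multiset LType →+ Set WEnv :=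
  Multiset.sumAddMonoidHom.comp (Multiset.mapAddMonoidHom t.interp)

theorem multiInterp_apply (t : CTerm) (m : Multiset LType) :
    t.multiInterp m = (m.map t.interp).sum := rfl

theorem multiInterp_singleton (t : CTerm) (L : LType) : t.multiInterp {L} = t.interp L := by
  rw [multiInterp_apply, Multiset.map_singleton, Multiset.sum_singleton]

theorem multiInterp_coe_cons (t : CTerm) (L : LType) (M : List LType) :
    t.multiInterp ↑(L :: M) = t.interp L + t.multiInterp ↑M := by
  simp only [multiInterp_apply, ← Multiset.cons_coe, Multiset.map_cons, Multiset.sum_cons]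

theorem mem_multiInterp_coe {t : CTerm} {M : List LType} {w : WEnv} :
    w ∈ t.multiInterp ↑M ↔ Nonempty (DerivM w.1 w.2 t M) := by
  induction M generalizing w with
  | nil =>
    rw [Multiset.coe_nil, map_zero, Set.mem_zero]
    constructor
    · rintro rfl
      exact ⟨.nil t⟩
    · obtain ⟨Γ, k⟩ := w
      rintro ⟨d⟩
      cases d
      rfl
  | cons L M ih =>
    rw [multiInterp_coe_cons, Set.mem_add]
    constructor
    · rintro ⟨v, ⟨d⟩, v', hv', rfl⟩
      exact (ih.1 hv').map (DerivM.cons d)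
    · obtain ⟨Γ, k⟩ := w
      rintro ⟨d⟩
      cases d with
      | cons d d' => exact ⟨(_, _), ⟨d⟩, (_, _), ih.2 ⟨d'⟩, rfl⟩

theorem interp_var (n : ℕ) (L : LType) : (var n).interp L = {(TEnv.single n L, 0)} := by
  ext ⟨Γ, k⟩
  constructor
  · rintro ⟨d⟩
    cases d
    rfl
  · intro h
    obtain ⟨rfl, rfl⟩ := Prod.mk.inj h
    exact ⟨.ax n L⟩

theorem mem_interp_lam {p : Player} {t : CTerm} {T : LType} {w : WEnv} :
    w ∈ (lam p t).interp T ↔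
      ∃ q, ∃ M : List LType, ∃ L, T = .arrow M p q L ∧ WEnv.cons ↑M w ∈ t.interp L := by
  constructor
  · obtain ⟨Γ, k⟩ := w
    rintro ⟨d⟩
    cases d with
    | lam _ q M d => exact ⟨q, M, _, rfl, ⟨d⟩⟩
  · rintro ⟨q, M, L, rfl, ⟨d⟩⟩
    exact ⟨.lam p q M d⟩

theorem interp_lam (p : Player) (t : CTerm) (T : LType) :
    (lam p t).interp T =
      ⋃ (q) (M : List LType) (L) (_ : T = .arrow M p q L), WEnv.cons ↑M ⁻¹' t.interp L := by
  ext w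
  simp only [mem_interp_lam, Set.mem_iUnion, Set.mem_preimage, exists_prop]

theorem mem_interp_app {q : Player} {t u : CTerm} {L : LType} {w : WEnv} :
    w ∈ (app q t u).interp L ↔
      ∃ M : List LType, ∃ p, ∃ v ∈ t.interp (.arrow M p q L), ∃ v' ∈ u.multiInterp ↑M,
        v + v' + (0, p.gamma q) = w := by
  constructor
  · obtain ⟨Γ, k⟩ := w
    rintro ⟨d⟩
    cases d with
    | app d d' =>
      exact ⟨_, _, (_, _), ⟨d⟩, (_, _), mem_multiInterp_coe.2 ⟨d'⟩, Prod.ext (add_zero _) rfl⟩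
  · rintro ⟨M, p, v, ⟨d⟩, v', hv', rfl⟩
    obtain ⟨d'⟩ := mem_multiInterp_coe.1 hv'
    have h_env : (v + v' + (0, p.gamma q)).1 = TEnv.add v.1 v'.1 := add_zero (v.1 + v'.1)
    exact ⟨h_env ▸ .app d d'⟩

theorem interp_app (q : Player) (t u : CTerm) (L : LType) :
    (app q t u).interp L =
      ⋃ (M : List LType) (p), t.interp (.arrow M p q L) + u.multiInterp ↑M + {(0, p.gamma q)} := by
  ext w
  simp only [mem_interp_app, Set.mem_iUnion, Set.add_singleton, Set.mem_image, Set.mem_add,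
    exists_exists_and_exists_and_eq_and]

theorem multiInterp_eq_bindHom {t t' : CTerm} {φ : WEnv →+ Set WEnv}
    (h : ∀ L, t'.interp L = bindHom φ (t.interp L)) (m : Multiset LType) :
    t'.multiInterp m = bindHom φ (t.multiInterp m) := by
  simp only [multiInterp_apply, map_multiset_sum, Multiset.map_map, Function.comp_def, h]

/-- The induction common to lifting and substitution: `next` is the effect of crossing a binder on
the parameters of the traversal `F`. -/
theorem interp_traverse {ι : Type*} {next : ι → ι} {F : ι → CTerm → CTerm}
    {φ : ι → WEnv →+ Set WEnv}
    (F_lam : ∀ i p t, F i (lam p t) = lam p (F (next i) t))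
    (F_app : ∀ i p t u, F i (app p t u) = app p (F i t) (F i u))
    (F_var : ∀ i n L, (F i (var n)).interp L = φ i (TEnv.single n L, 0))
    (φ_cons : ∀ i m w, φ (next i) (WEnv.cons m w) = WEnv.cons m '' φ i w)
    (φ_weight : ∀ i k, φ i (0, k) = {(0, k)}) (i : ι) (t : CTerm) (L : LType) :
    (F i t).interp L = bindHom (φ i) (t.interp L) := by
  induction t generalizing i L with
  | var n => rw [F_var, interp_var, bindHom_singleton]
  | lam p t ih =>
    simp only [F_lam, interp_lam, ih, WEnv.preimage_cons_bindHom (φ_cons i), bindHom_iUnion]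
  | app p t u iht ihu =>
    simp only [F_app, interp_app, iht, multiInterp_eq_bindHom (ihu i), bindHom_iUnion, map_add,
      bindHom_singleton, φ_weight]

/-- Action on typings of lifting a term at index `d`. -/
def liftAction (d : ℕ) : WEnv →+ Set WEnv :=
  Set.singletonAddMonoidHom.comp ((TEnv.weaken d).prodMap (AddMonoidHom.id ℕ))

theorem liftAction_apply (d : ℕ) (w : WEnv) : liftAction d w = {(TEnv.weaken d w.1, w.2)} := rfl

theorem interp_liftAt (t : CTerm) (d : ℕ) (L : LType) :
    (t.liftAt d).interp L = bindHom (liftAction d) (t.interp L) := by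
  refine interp_traverse (next := (· + 1)) (F := fun d t => t.liftAt d) (φ := liftAction)
    (fun _ _ _ => rfl) (fun _ _ _ _ => rfl) (fun d n L => ?_) (fun d m w => ?_) (fun d k => ?_)
    d t L
  · rw [liftAt, interp_var, liftAction_apply, TEnv.weaken_single]
  · simp only [liftAction_apply, WEnv.cons, TEnv.weaken_succ_cons, Set.image_singleton]
  · rw [liftAction_apply, map_zero]

theorem multiInterp_liftAt_zero (t : CTerm) (m : Multiset LType) :
    (t.liftAt 0).multiInterp m = WEnv.cons 0 '' t.multiInterp m := by
  rw [multiInterp_eq_bindHom (t.interp_liftAt 0), liftAction, bindHom_singletonAddMonoidHom_comp]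
  exact Set.image_congr fun w _ => Prod.ext (TEnv.weaken_zero_eq_cons w.1) rfl

/-- Action on typings of substituting `u` for the index `x`: every type given to `x` is replaced by
a typing of `u` with that type. -/
def substAction (x : ℕ) (u : CTerm) : WEnv →+ Set WEnv :=
  Set.singletonAddMonoidHom.comp ((TEnv.erase x).prodMap (AddMonoidHom.id ℕ)) +
    u.multiInterp.comp ((Pi.evalAddMonoidHom _ x).comp (AddMonoidHom.fst TEnv ℕ))

theorem substAction_apply (x : ℕ) (u : CTerm) (w : WEnv) :
    substAction x u w = {(TEnv.erase x w.1, w.2)} + u.multiInterp (w.1 x) := rfl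

theorem interp_subst_var (n x : ℕ) (u : CTerm) (L : LType) :
    ((var n).subst x u).interp L = substAction x u (TEnv.single n L, 0) := by
  rw [substAction_apply, subst]
  rcases lt_trichotomy n x with h | rfl | h
  · simp only [h.ne, h.ne', h.not_gt, if_false, interp_var, TEnv.erase_single_of_lt h,
      TEnv.single_apply, map_zero, add_zero]
  · simp only [if_true, TEnv.erase_single_self, TEnv.single_apply, multiInterp_singleton,
      ← Prod.zero_eq_mk, Set.singleton_zero, zero_add]
  · simp only [h.ne, h.ne', h, if_false, if_true, interp_var, TEnv.erase_single_of_gt h,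
      TEnv.single_apply, map_zero, add_zero]

theorem substAction_succ_cons (x : ℕ) (u : CTerm) (m : Multiset LType) (w : WEnv) :
    substAction (x + 1) (u.liftAt 0) (WEnv.cons m w) = WEnv.cons m '' substAction x u w := by
  have h_erase : (TEnv.erase (x + 1) (WEnv.cons m w).1, (WEnv.cons m w).2) =
      WEnv.cons m (TEnv.erase x w.1, w.2) := Prod.ext (TEnv.erase_succ_cons x m w.1) rfl
  rw [substAction_apply, substAction_apply, h_erase, multiInterp_liftAt_zero]
  simp only [Set.singleton_add, Set.image_image, WEnv.cons_add_cons, add_zero]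
  rfl

theorem interp_subst (t : CTerm) (x : ℕ) (u : CTerm) (L : LType) :
    (t.subst x u).interp L = bindHom (substAction x u) (t.interp L) := by
  refine interp_traverse (next := fun i : ℕ × CTerm => (i.1 + 1, i.2.liftAt 0))
    (F := fun i t => t.subst i.1 i.2) (φ := fun i => substAction i.1 i.2)
    (fun _ _ _ => rfl) (fun _ _ _ _ => rfl) (fun i n L => interp_subst_var n i.1 i.2 L)
    (fun i m w => substAction_succ_cons i.1 i.2 m w) (fun i k => ?_) (x, u) t L
  simp only [substAction_apply, map_zero, Pi.zero_apply, add_zero]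

theorem substAction_zero_cons (u : CTerm) (m : Multiset LType) (w : WEnv) :
    substAction 0 u (WEnv.cons m w) = {w} + u.multiInterp m := rfl

theorem interp_silent_beta (p : Player) (t u : CTerm) :
    (app p (lam p t) u).interp = (t.subst 0 u).interp := by
  ext L w
  simp only [interp_subst, mem_bindHom, mem_interp_app, mem_interp_lam]
  constructor
  · rintro ⟨M, _, v, ⟨_, _, _, ⟨⟩, hv⟩, v', hv', rfl⟩
    refine ⟨WEnv.cons ↑M v, hv, ?_⟩
    rw [substAction_zero_cons, Player.gamma, if_pos rfl, ← Prod.zero_eq_mk, add_zero]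
    exact Set.add_mem_add rfl hv'
  · rintro ⟨w', hw', hw⟩
    obtain ⟨⟨M⟩, v, rfl⟩ := w'.exists_cons_eq
    obtain ⟨_, rfl, v', hv', rfl⟩ := hw
    refine ⟨M, p, v, ⟨p, M, L, rfl, hw'⟩, v', hv', ?_⟩
    rw [Player.gamma, if_pos rfl, ← Prod.zero_eq_mk, add_zero]
    rfl

theorem interp_eq_of_stepTau {t u : CTerm} (h : StepTau t u) : t.interp = u.interp := by
  induction h with
  | root h =>
    obtain ⟨p, t, u⟩ := h
    exact interp_silent_beta p t u
  | lam p _ ih =>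
    funext L
    simp only [interp_lam, ih]
  | appL p u _ ih =>
    funext L
    simp only [interp_app, ih]
  | appR p t _ ih =>
    funext L
    simp only [interp_app, multiInterp, ih]

theorem interp_eq_of_silentConv {t u : CTerm} (h : SilentConv t u) : t.interp = u.interp := by
  induction h with
  | refl => rfl
  | tail _ h ih =>
    exact h.elim (fun h => ih.trans (interp_eq_of_stepTau h))
      (fun h => ih.trans (interp_eq_of_stepTau h).symm)

theorem multiInterp_mono {t u : CTerm} (h : t.interp ≤ u.interp) (m : Multiset LType) :
    t.multiInterp m ≤ u.multiInterp m :=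
  Set.multiset_sum_subset_multiset_sum m _ _ fun L _ => h L

theorem interp_fill_mono {t u : CTerm} (h : t.interp ≤ u.interp) (C : CCtx) :
    (C.fill t).interp ≤ (C.fill u).interp := by
  induction C with
  | hole => exact h
  | lam p C ih =>
    intro L
    simp only [CCtx.fill, interp_lam]
    gcongr
    exact ih _
  | appL p C s ih =>
    intro L
    simp only [CCtx.fill, interp_app]
    gcongr
    exact ih _
  | appR p s C ih =>
    intro L
    simp only [CCtx.fill, interp_app]
    gcongr
    exact multiInterp_mono ih _

theorem cSem_subset_iff {t u : CTerm} : CSem t ⊆ CSem u ↔ t.interp ≤ u.interp :=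
  ⟨fun h L w hw => h (a := (w.1, w.2, L)) hw, fun h x hx => h x.2.2 (a := (x.1, x.2.1)) hx⟩

end CTerm

namespace Lam

theorem tag_liftAt (t : Lam) (d : ℕ) (p : Player) :
    (t.liftAt d).tag p = (t.tag p).liftAt d := by
  induction t generalizing d with
  | var n => rfl
  | lam t ih => simp only [liftAt, tag, CTerm.liftAt, ih]
  | app t u iht ihu => simp only [liftAt, tag, CTerm.liftAt, iht, ihu]

theorem tag_subst (t : Lam) (x : ℕ) (u : Lam) (p : Player) :
    (t.subst x u).tag p = (t.tag p).subst x (u.tag p) := by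
  induction t generalizing x u with
  | var n =>
    simp only [subst, tag, CTerm.subst]
    split_ifs <;> rfl
  | lam t ih => simp only [subst, tag, CTerm.subst, ih, tag_liftAt]
  | app t s iht ihs => simp only [subst, tag, CTerm.subst, iht, ihs]

theorem stepTau_tag {t u : Lam} (h : LBeta t u) (p : Player) : StepTau (t.tag p) (u.tag p) := by
  induction h with
  | root h =>
    obtain ⟨t, u⟩ := h
    rw [tag_subst]
    exact .root (.beta p (t.tag p) (u.tag p))
  | lam _ ih => exact .lam p ih
  | appL u _ ih => exact .appL p (u.tag p) ih
  | appR t _ ih => exact .appR p (t.tag p) ih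

theorem silentConv_tag {t u : Lam} (h : LBetaConv t u) (p : Player) :
    SilentConv (t.tag p) (u.tag p) := by
  induction h with
  | refl => exact .refl
  | tail _ h ih => exact ih.tail (h.imp (stepTau_tag · p) (stepTau_tag · p))

end Lam

theorem LCtx.tag_fill (C : LCtx) (t : Lam) (p : Player) :
    (C.fill t).tag p = (C.tag p).fill (t.tag p) := by
  induction C with
  | hole => rfl
  | lam C ih => simp only [fill, tag, CCtx.fill, Lam.tag, ih]
  | appL C u ih => simp only [fill, tag, CCtx.fill, Lam.tag, ih]
  | appR s C ih => simp only [fill, tag, CCtx.fill, Lam.tag, ih]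

theorem bTypeLe_iff {t u : Lam} :
    BTypeLe t u ↔ (t.tag .black).interp ≤ (u.tag .black).interp :=
  CTerm.cSem_subset_iff

theorem bTypeLe_fill {t u : Lam} (h : BTypeLe t u) (C : LCtx) :
    BTypeLe (C.fill t) (C.fill u) := by
  rw [bTypeLe_iff] at h ⊢
  simpa only [LCtx.tag_fill] using CTerm.interp_fill_mono h (C.tag .black)

theorem bTypeLe_of_lBetaConv {t u : Lam} (h : LBetaConv t u) : BTypeLe t u :=
  bTypeLe_iff.2 (CTerm.interp_eq_of_silentConv (Lam.silentConv_tag h .black)).le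

theorem single_mem_interp_eta_var (x : ℕ) (L : LType) (p q : Player) :
    (TEnv.single x (.arrow [] p q L), p.gamma q) ∈
      (CTerm.lam q (.app q (.var (x + 1)) (.var 0))).interp (.arrow [] q q L) := by
  refine CTerm.mem_interp_lam.2 ⟨q, [], L, rfl, CTerm.mem_interp_app.2
    ⟨[], p, (TEnv.single (x + 1) (.arrow [] p q L), 0), ?_, 0, ?_, ?_⟩⟩
  · rw [CTerm.interp_var]
    rfl
  · rw [Multiset.coe_nil, map_zero]
    rfl
  · rw [Multiset.coe_nil, WEnv.cons, TEnv.cons_zero_single, add_zero, Prod.mk_add_mk, add_zero,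
      zero_add]

theorem not_bTypeLe_eta_var (x : ℕ) :
    ¬ BTypeLe (.lam (.app (.var (x + 1)) (.var 0))) (.var x) := by
  intro h
  have h_var := bTypeLe_iff.1 h _ (single_mem_interp_eta_var x .atom .white .black)
  rw [Lam.tag, CTerm.interp_var] at h_var
  exact one_ne_zero (congrArg Prod.snd h_var)

theorem exists_lEta_not_bTypeLe : ∃ t u, LEta t u ∧ ¬ BTypeLe t u :=
  ⟨_, .var 0, .root (.eta (.var 0)), not_bTypeLe_eta_var 0⟩

/-- The black type preorder `⊑•type` is an inequational λ-theory: a compatible preorder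
containing β-conversion; moreover it is neither extensional (it does not contain
η-conversion) nor semi-extensional (it does not contain η-reduction). -/
theorem btype_inequational_theory :
    (∀ t, BTypeLe t t) ∧
    (∀ t u s, BTypeLe t u → BTypeLe u s → BTypeLe t s) ∧
    (∀ t u, BTypeLe t u → ∀ C : LCtx, BTypeLe (C.fill t) (C.fill u)) ∧
    (∀ t u, LBetaConv t u → BTypeLe t u) ∧
    (∃ t u, LEtaConv t u ∧ ¬ BTypeLe t u) ∧
    (∃ t u, LEta t u ∧ ¬ BTypeLe t u) := by
  refine ⟨fun t => subset_rfl, fun t u s htu hus => htu.trans hus,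
    fun t u h C => bTypeLe_fill h C, fun t u h => bTypeLe_of_lBetaConv h, ?_,
    exists_lEta_not_bTypeLe⟩
  obtain ⟨t, u, h_eta, h_not⟩ := exists_lEta_not_bTypeLe
  exact ⟨t, u, .single (.inl h_eta), h_not⟩
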